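/- Let F ∈ C⁰([0,T]; L²(ℝ³;ℝ³)) with F(t,·) = 0 for 0 ≤ t ≤ ε (some ε > 0), and suppose C solves ∂_t² C - ΔC = -∫₀ᵗ∫₀ˢ ∇ div F(u,·) du ds + F with C(0) = ∂_t C(0) = 0. Then ∂_t² div C - div F solves the homogeneous scalar wave equation with vanishing data for small time, hence vanishes identically; consequently div C(t) = ∫₀ᵗ∫₀ˢ div F(u,·) du ds and C solves the original system ∂_t² C - ΔC + ∇ div C = F. -/

import Mathlib

open scoped BigOperators

/-- `∂_j F` at `x` for a vector field on ℝ³. -/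
noncomputable def pd (F : (Fin 3 → ℝ) → (Fin 3 → ℝ)) (j : Fin 3) (x : Fin 3 → ℝ) :
    Fin 3 → ℝ :=
  fderiv ℝ F x (Pi.single j 1)

/-- divergence of a vector field on ℝ³. -/
noncomputable def div3 (F : (Fin 3 → ℝ) → (Fin 3 → ℝ)) (x : Fin 3 → ℝ) : ℝ :=
  ∑ i, pd F i x i

/-- gradient of a scalar function on ℝ³. -/
noncomputable def grad3 (f : (Fin 3 → ℝ) → ℝ) (x : Fin 3 → ℝ) : Fin 3 → ℝ :=
  fun i => fderiv ℝ f x (Pi.single i 1)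

/-- componentwise Laplacian of a vector field on ℝ³. -/
noncomputable def lap3 (F : (Fin 3 → ℝ) → (Fin 3 → ℝ)) (x : Fin 3 → ℝ) : Fin 3 → ℝ :=
  fun i => ∑ j, pd (pd F j) j x i
open MeasureTheory

/-- Smooth functions on space-time, as a subalgebra. -/
noncomputable def Sm : Subalgebra ℝ ((Fin 4 → ℝ) → ℝ) where
  carrier := {g | ContDiff ℝ (⊤ : ℕ∞) g}
  mul_mem' := fun {_ _} ha hb => ContDiff.mul (𝕜 := ℝ) (Set.mem_ofPred.1 ha) (Set.mem_ofPred.1 hb)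
  add_mem' := fun {_ _} ha hb => ContDiff.add (𝕜 := ℝ) (Set.mem_ofPred.1 ha) (Set.mem_ofPred.1 hb)
  algebraMap_mem' := fun c => Set.mem_ofPred.2 (contDiff_const (c := c))

theorem Sm_cd (g : Sm) : ContDiff ℝ (⊤ : ℕ∞) (g : (Fin 4 → ℝ) → ℝ) := g.2

theorem Sm_diff (g : Sm) : Differentiable ℝ (g : (Fin 4 → ℝ) → ℝ) :=
  (Sm_cd g).differentiable (by simp)

theorem Sm_cont (g : Sm) : Continuous (g : (Fin 4 → ℝ) → ℝ) := (Sm_cd g).continuous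

/-- The partial derivative as a derivation. -/
noncomputable def Dp (k : Fin 4) : Derivation ℝ Sm Sm :=
  Derivation.mk'
    { toFun := fun g => ⟨fun z => fderiv ℝ (g : (Fin 4 → ℝ) → ℝ) z (Pi.single k 1),
        ((Sm_cd g).fderiv_right (m := (⊤ : ℕ∞)) (by simp)).clm_apply contDiff_const⟩
      map_add' := by
        intro a b
        ext z
        simp [fderiv_add ((Sm_diff a) z) ((Sm_diff b) z)]
      map_smul' := by
        intro c a
        ext z
        simp [fderiv_const_smul ((Sm_diff a) z)] }
    (by
      intro a b
      ext z
      simp [fderiv_mul ((Sm_diff a) z) ((Sm_diff b) z)])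

theorem Dp_apply (k : Fin 4) (g : Sm) (z : Fin 4 → ℝ) :
    (Dp k g : (Fin 4 → ℝ) → ℝ) z = fderiv ℝ (g : (Fin 4 → ℝ) → ℝ) z (Pi.single k 1) := rfl

theorem Dp_comm (k l : Fin 4) (g : Sm) : Dp k (Dp l g) = Dp l (Dp k g) := by
  have key : ∀ (k l : Fin 4) (z : Fin 4 → ℝ), (Dp k (Dp l g) : (Fin 4 → ℝ) → ℝ) z
      = fderiv ℝ (fderiv ℝ (g : (Fin 4 → ℝ) → ℝ)) z (Pi.single k 1) (Pi.single l 1) := by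
    intro k l z
    rw [Dp_apply]
    have h : DifferentiableAt ℝ (fderiv ℝ (g : (Fin 4 → ℝ) → ℝ)) z :=
      (((Sm_cd g).fderiv_right (m := (⊤ : ℕ∞)) (by simp)).differentiable (by simp)) z
    have : ((Dp l g : Sm) : (Fin 4 → ℝ) → ℝ)
      = fun z => fderiv ℝ (g : (Fin 4 → ℝ) → ℝ) z (Pi.single l 1) := rfl
    rw [this, fderiv_clm_apply h (differentiableAt_const _)]
    simp
  ext z
  rw [key, key]
  exact ((Sm_cd g).contDiffAt.isSymmSndFDerivAt (by simpa using (WithTop.coe_le_coe.2 le_top : (((2 : ℕ∞)) : WithTop ℕ∞) ≤ ((⊤ : ℕ∞) : WithTop ℕ∞)))) _ _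

theorem Dp_line (k : Fin 4) (g : Sm) (z : Fin 4 → ℝ) :
    HasDerivAt (fun s : ℝ => (g : (Fin 4 → ℝ) → ℝ) (z + s • Pi.single k (1:ℝ)))
      ((Dp k g : (Fin 4 → ℝ) → ℝ) z) 0 := by
  have h1 : HasDerivAt (fun s : ℝ => z + s • (Pi.single k (1:ℝ) : Fin 4 → ℝ))
      (Pi.single k (1:ℝ)) 0 := by
    simpa using ((hasDerivAt_id (0:ℝ)).smul_const (Pi.single k (1:ℝ) : Fin 4 → ℝ)).const_add z
  have h2 := ((Sm_diff g) (z + (0:ℝ) • (Pi.single k (1:ℝ) : Fin 4 → ℝ))).hasFDerivAt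
  have := h2.comp_hasDerivAt (0:ℝ) h1
  simpa [Dp_apply, Function.comp_def] using this

/-- A space-time point. -/
def mk4 (t : ℝ) (x : Fin 3 → ℝ) : Fin 4 → ℝ := Fin.cons t x

@[simp] theorem mk4_zero (t x) : mk4 t x 0 = t := rfl
@[simp] theorem mk4_succ (t x) (j : Fin 3) : mk4 t x j.succ = x j := rfl

theorem mk4_eta (z : Fin 4 → ℝ) : mk4 (z 0) (fun j => z j.succ) = z := by
  ext i
  refine Fin.cases ?_ (fun j => ?_) i <;> simp

theorem mk4_contDiff : ContDiff ℝ (⊤ : ℕ∞) (fun p : ℝ × (Fin 3 → ℝ) => mk4 p.1 p.2) := by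
  rw [contDiff_pi]
  intro i
  refine Fin.cases ?_ (fun j => ?_) i
  · simpa using contDiff_fst
  · simp only [mk4_succ]; fun_prop

theorem Dp_time (g : Sm) (x : Fin 3 → ℝ) (t : ℝ) :
    HasDerivAt (fun t => (g : (Fin 4 → ℝ) → ℝ) (mk4 t x))
      ((Dp 0 g : (Fin 4 → ℝ) → ℝ) (mk4 t x)) t := by
  have h1 : HasDerivAt (fun t : ℝ => mk4 t x) (Pi.single (0 : Fin 4) (1:ℝ)) t := by
    rw [hasDerivAt_pi]
    intro i
    refine Fin.cases ?_ (fun j => ?_) i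
    · exact hasDerivAt_id t
    · simpa using hasDerivAt_const t (x j)
  exact ((Sm_diff g) (mk4 t x)).hasFDerivAt.comp_hasDerivAt t h1

theorem Dp_space (g : Sm) (x : Fin 3 → ℝ) (t : ℝ) (j : Fin 3) :
    fderiv ℝ (fun x => (g : (Fin 4 → ℝ) → ℝ) (mk4 t x)) x (Pi.single j 1)
      = (Dp j.succ g : (Fin 4 → ℝ) → ℝ) (mk4 t x) := by
  have h1 : HasFDerivAt (fun x : Fin 3 → ℝ => mk4 t x)
      (ContinuousLinearMap.pi (Fin.cons 0 (fun j => ContinuousLinearMap.proj (R := ℝ) (φ := fun _ : Fin 3 => ℝ) j))) x := by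
    rw [hasFDerivAt_pi]
    intro i
    refine Fin.cases ?_ (fun j => ?_) i
    · simpa using hasFDerivAt_const t x
    · simpa using hasFDerivAt_apply (𝕜 := ℝ) j x
  have h2 := ((Sm_diff g) (mk4 t x)).hasFDerivAt.comp x h1
  have h3 := h2.fderiv
  rw [Function.comp_def] at h3
  rw [h3, Dp_apply]
  simp only [ContinuousLinearMap.comp_apply]
  congr 1
  ext i
  refine Fin.cases ?_ (fun k => ?_) i
  · simp
  · simp [Pi.single_apply]

/-- Smooth functions vanishing at time `t`. -/
noncomputable def Zt (t : ℝ) : Submodule ℝ Sm where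
  carrier := {g | ∀ z : Fin 4 → ℝ, z 0 = t → (g : (Fin 4 → ℝ) → ℝ) z = 0}
  add_mem' := by
    intro a b ha hb z hz
    simp [ha z hz, hb z hz]
  zero_mem' := by intro z _; rfl
  smul_mem' := by
    intro c a ha z hz
    simp [ha z hz]

theorem Zt_Dp {t : ℝ} {g : Sm} (h : g ∈ Zt t) (j : Fin 3) : Dp j.succ g ∈ Zt t := by
  intro z hz
  have h1 := Dp_line j.succ g z
  have h2 : (fun s : ℝ => (g : (Fin 4 → ℝ) → ℝ) (z + s • Pi.single j.succ (1:ℝ)))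
      = fun _ => 0 := by
    ext s
    apply h
    simp [hz]
  rw [h2] at h1
  exact h1.unique (hasDerivAt_const _ _)

theorem Zt_iff {t : ℝ} {g : Sm} :
    g ∈ Zt t ↔ ∀ x, (g : (Fin 4 → ℝ) → ℝ) (mk4 t x) = 0 := by
  constructor
  · intro h x
    exact h _ rfl
  · intro h z hz
    rw [← mk4_eta z, hz]
    exact h _

theorem cont_time (g : Sm) (x : Fin 3 → ℝ) :
    Continuous (fun t => (g : (Fin 4 → ℝ) → ℝ) (mk4 t x)) :=
  continuous_iff_continuousAt.2 fun t => (Dp_time g x t).continuousAt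

/-- Integration of an ODE in time. -/
theorem ftc_once {T : ℝ} {h h' k : ℝ → ℝ} (hd : ∀ t, HasDerivAt h (h' t) t) (h0 : h 0 = 0)
    (hc : Continuous h') (hk : ∀ t ∈ Set.Icc 0 T, h' t = k t) :
    ∀ t ∈ Set.Icc 0 T, h t = ∫ s in (0:ℝ)..t, k s := by
  intro t ht
  have := intervalIntegral.integral_eq_sub_of_hasDerivAt (a := 0) (b := t)
    (fun s _ => hd s) (hc.intervalIntegrable 0 t)
  rw [h0, sub_zero] at this
  rw [← this]
  apply intervalIntegral.integral_congr
  intro s hs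
  rw [Set.uIcc_of_le ht.1] at hs
  exact hk s ⟨hs.1, hs.2.trans ht.2⟩

theorem ftc_twice {T : ℝ} {g h : Sm} (h0 : g ∈ Zt 0) (h1 : Dp 0 g ∈ Zt 0)
    (h2 : ∀ t ∈ Set.Icc 0 T, Dp 0 (Dp 0 g) - h ∈ Zt t) :
    ∀ t ∈ Set.Icc 0 T, ∀ x, (g : (Fin 4 → ℝ) → ℝ) (mk4 t x)
      = ∫ s in (0:ℝ)..t, ∫ u in (0:ℝ)..s, (h : (Fin 4 → ℝ) → ℝ) (mk4 u x) := by
  intro t ht x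
  refine ftc_once (T := T) (Dp_time g x) (h0 _ rfl) (cont_time _ x) ?_ t ht
  refine ftc_once (T := T) (Dp_time (Dp 0 g) x) (h1 _ rfl) (cont_time _ x) ?_
  intro s hs
  have := h2 s hs _ (mk4_zero s x)
  simpa [sub_eq_zero] using this

/-- Differentiating an integral equation on a closed interval. -/
theorem diff_once {T : ℝ} (hT : 0 < T) {h h' k : ℝ → ℝ} (hd : ∀ t, HasDerivAt h (h' t) t)
    (hc : Continuous k) (hk : ∀ t ∈ Set.Icc 0 T, h t = ∫ s in (0:ℝ)..t, k s) :
    ∀ t ∈ Set.Icc 0 T, h' t = k t := by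
  intro t ht
  have h1 : HasDerivWithinAt h (k t) (Set.Icc 0 T) t := by
    refine HasDerivWithinAt.congr (f := fun t => ∫ s in (0:ℝ)..t, k s) ?_ hk (hk t ht)
    exact (hc.integral_hasStrictDerivAt 0 t).hasDerivAt.hasDerivWithinAt
  exact ((uniqueDiffOn_Icc hT) t ht).eq_deriv _ (hd t).hasDerivWithinAt h1

/-- coordinate function -/
noncomputable def Xc (k : Fin 4) : Sm := ⟨fun z => z k, (contDiff_apply ℝ ℝ k : ContDiff ℝ (⊤ : ℕ∞) fun z : Fin 4 → ℝ => z k)⟩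

@[simp] theorem Xc_apply (k : Fin 4) (z : Fin 4 → ℝ) : (Xc k : (Fin 4 → ℝ) → ℝ) z = z k := rfl

theorem Dp_Xc (k l : Fin 4) : Dp k (Xc l) = algebraMap ℝ Sm (if l = k then 1 else 0) := by
  ext z
  rw [Dp_apply]
  have : ((Xc l : Sm) : (Fin 4 → ℝ) → ℝ) = fun z => z l := rfl
  rw [this, (hasFDerivAt_apply (𝕜 := ℝ) l z).fderiv]
  by_cases h : l = k <;> simp [h]

/-- the cone function -/
noncomputable def qc (R : ℝ) (x0 : Fin 3 → ℝ) : Sm :=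
  (algebraMap ℝ Sm R - Xc 0) * (algebraMap ℝ Sm R - Xc 0)
    - ∑ j : Fin 3, (Xc j.succ - algebraMap ℝ Sm (x0 j)) * (Xc j.succ - algebraMap ℝ Sm (x0 j))

theorem qc_apply (R : ℝ) (x0 : Fin 3 → ℝ) (z : Fin 4 → ℝ) :
    (qc R x0 : (Fin 4 → ℝ) → ℝ) z = (R - z 0) * (R - z 0)
      - ∑ j : Fin 3, (z j.succ - x0 j) * (z j.succ - x0 j) := by
  simp [qc, Fin.sum_univ_three]

theorem qc_D0 (R : ℝ) (x0 : Fin 3 → ℝ) (z : Fin 4 → ℝ) :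
    (Dp 0 (qc R x0) : (Fin 4 → ℝ) → ℝ) z = - 2 * (R - z 0) := by
  simp [qc, Fin.sum_univ_three, Dp_Xc]
  ring

theorem qc_Dj (R : ℝ) (x0 : Fin 3 → ℝ) (z : Fin 4 → ℝ) (j : Fin 3) :
    (Dp j.succ (qc R x0) : (Fin 4 → ℝ) → ℝ) z = - 2 * (z j.succ - x0 j) := by
  fin_cases j <;> simp [qc, Fin.sum_univ_three, Dp_Xc] <;> ring

/-- the cutoff -/
noncomputable def cut (q : Sm) : Sm :=
  ⟨fun z => expNegInvGlue ((q : (Fin 4 → ℝ) → ℝ) z), expNegInvGlue.contDiff.comp (Sm_cd q)⟩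

theorem cut_apply (q : Sm) (z : Fin 4 → ℝ) :
    (cut q : (Fin 4 → ℝ) → ℝ) z = expNegInvGlue ((q : (Fin 4 → ℝ) → ℝ) z) := rfl

theorem cut_Dp (q : Sm) (k : Fin 4) (z : Fin 4 → ℝ) :
    (Dp k (cut q) : (Fin 4 → ℝ) → ℝ) z
      = deriv expNegInvGlue ((q : (Fin 4 → ℝ) → ℝ) z) * (Dp k q : (Fin 4 → ℝ) → ℝ) z := by
  rw [Dp_apply, Dp_apply]
  have h1 : DifferentiableAt ℝ expNegInvGlue ((q : (Fin 4 → ℝ) → ℝ) z) :=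
    ((expNegInvGlue.contDiff (n := 1)).differentiable (by simp)) _
  have h2 := h1.hasDerivAt.comp_hasFDerivAt z (Sm_diff q z).hasFDerivAt
  have h3 : ((cut q : Sm) : (Fin 4 → ℝ) → ℝ) = expNegInvGlue ∘ (q : (Fin 4 → ℝ) → ℝ) := rfl
  rw [h3, h2.fderiv]
  simp

theorem dglue_nonneg (s : ℝ) : 0 ≤ deriv expNegInvGlue s :=
  expNegInvGlue.monotone.deriv_nonneg

theorem dglue_zero {s : ℝ} (hs : s < 0) : deriv expNegInvGlue s = 0 := by
  have : expNegInvGlue =ᶠ[nhds s] fun _ => 0 := by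
    filter_upwards [Iio_mem_nhds hs] with y hy
    exact expNegInvGlue.zero_of_nonpos (le_of_lt hy)
  rw [this.deriv_eq]
  simp

/-- the energy flux field -/
noncomputable def fld (Φ v : Sm) : Fin 4 → Sm :=
  Fin.cons (Φ * (Dp 0 v * Dp 0 v + ∑ j : Fin 3, Dp j.succ v * Dp j.succ v))
    (fun j : Fin 3 => -(Φ * (Dp 0 v * Dp j.succ v) + Φ * (Dp 0 v * Dp j.succ v)))

theorem fld_zero (Φ v : Sm) :
    fld Φ v 0 = Φ * (Dp 0 v * Dp 0 v + ∑ j : Fin 3, Dp j.succ v * Dp j.succ v) := rfl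

theorem fld_succ (Φ v : Sm) (j : Fin 3) :
    fld Φ v j.succ = -(Φ * (Dp 0 v * Dp j.succ v) + Φ * (Dp 0 v * Dp j.succ v)) := rfl

theorem fld_div (Φ v : Sm) : ∑ i, Dp i (fld Φ v i)
    = Dp 0 Φ * (Dp 0 v * Dp 0 v + ∑ j : Fin 3, Dp j.succ v * Dp j.succ v)
      - 2 * (∑ j : Fin 3, Dp j.succ Φ * (Dp 0 v * Dp j.succ v))
      + 2 * Φ * Dp 0 v * (Dp 0 (Dp 0 v) - ∑ j : Fin 3, Dp j.succ (Dp j.succ v)) := by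
  rw [Fin.sum_univ_succ]
  simp only [fld_zero, fld_succ, Fin.sum_univ_three, map_add, map_neg, Derivation.leibniz,
    smul_eq_mul, Dp_comm _ 0]
  ring

theorem fld_div_nonpos {R : ℝ} {x0 : Fin 3 → ℝ} {v : Sm} {z : Fin 4 → ℝ} (hz : z 0 < R)
    (hw : ((Dp 0 (Dp 0 v) - ∑ j : Fin 3, Dp j.succ (Dp j.succ v) : Sm) : (Fin 4 → ℝ) → ℝ) z = 0) :
    ((∑ i, Dp i (fld (cut (qc R x0)) v i) : Sm) : (Fin 4 → ℝ) → ℝ) z ≤ 0 := by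
  rw [fld_div]
  have e : ∀ A B : Sm, ((A + B * (Dp 0 (Dp 0 v) - ∑ j : Fin 3, Dp j.succ (Dp j.succ v)) : Sm) :
      (Fin 4 → ℝ) → ℝ) z = (A : (Fin 4 → ℝ) → ℝ) z := by
    intro A B
    have : ((A + B * (Dp 0 (Dp 0 v) - ∑ j : Fin 3, Dp j.succ (Dp j.succ v)) : Sm) :
      (Fin 4 → ℝ) → ℝ) z = (A : (Fin 4 → ℝ) → ℝ) z + (B : (Fin 4 → ℝ) → ℝ) z *
       ((Dp 0 (Dp 0 v) - ∑ j : Fin 3, Dp j.succ (Dp j.succ v) : Sm) : (Fin 4 → ℝ) → ℝ) z := rfl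
    rw [this, hw]; simp
  rw [e, two_mul]
  have c1 := fun k => cut_Dp (qc R x0) k z
  have c0 := qc_D0 R x0 z
  have cj := qc_Dj R x0 z
  have hq := qc_apply R x0 z
  simp only [Fin.sum_univ_three] at hq ⊢
  simp only [Subalgebra.coe_sub, Subalgebra.coe_add, Subalgebra.coe_mul, Pi.add_apply,
    Pi.sub_apply, Pi.mul_apply, c1, c0, cj]
  rcases lt_or_ge ((qc R x0 : (Fin 4 → ℝ) → ℝ) z) 0 with h | h
  · rw [dglue_zero h]; simp
  · have hd := dglue_nonneg ((qc R x0 : (Fin 4 → ℝ) → ℝ) z)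
    rw [hq] at h
    generalize deriv expNegInvGlue ((qc R x0 : (Fin 4 → ℝ) → ℝ) z) = d at hd ⊢
    generalize (Dp 0 v : (Fin 4 → ℝ) → ℝ) z = a
    generalize (Dp (Fin.succ 0) v : (Fin 4 → ℝ) → ℝ) z = p0
    generalize (Dp (Fin.succ 1) v : (Fin 4 → ℝ) → ℝ) z = p1
    generalize (Dp (Fin.succ 2) v : (Fin 4 → ℝ) → ℝ) z = p2
    generalize z (Fin.succ 0) - x0 0 = d0 at h ⊢
    generalize z (Fin.succ 1) - x0 1 = d1 at h ⊢
    generalize z (Fin.succ 2) - x0 2 = d2 at h ⊢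
    have hr : 0 < R - z 0 := by linarith
    generalize R - z 0 = r at h hr ⊢
    have key : 0 ≤ r * (a * a + (p0 * p0 + p1 * p1 + p2 * p2))
        - 2 * a * (d0 * p0 + d1 * p1 + d2 * p2) := by
      have : 0 ≤ r * (r * (a * a + (p0 * p0 + p1 * p1 + p2 * p2))
        - 2 * a * (d0 * p0 + d1 * p1 + d2 * p2)) := by
        nlinarith [sq_nonneg (r * p0 - a * d0), sq_nonneg (r * p1 - a * d1),
          sq_nonneg (r * p2 - a * d2), mul_nonneg (sq_nonneg a) h]
      exact nonneg_of_mul_nonneg_right this hr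
    have := mul_nonneg hd key
    nlinarith [this]

theorem energy_core {T : ℝ} {v : Sm} (h0 : v ∈ Zt 0) (h1 : Dp 0 v ∈ Zt 0)
    (h2 : ∀ t ∈ Set.Icc 0 T, Dp 0 (Dp 0 v) - ∑ j : Fin 3, Dp j.succ (Dp j.succ v) ∈ Zt t)
    {t0 : ℝ} (ht0 : t0 ∈ Set.Icc 0 T) (x0 : Fin 3 → ℝ) :
    (Dp 0 v : (Fin 4 → ℝ) → ℝ) (mk4 t0 x0) = 0 := by
  set R : ℝ := t0 + 1 with hR
  have hRpos : 0 < R := by linarith [ht0.1]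
  set Φ : Sm := cut (qc R x0) with hΦ
  set lo : Fin 4 → ℝ := mk4 0 (fun j => x0 j - R) with hlo
  set hi : Fin 4 → ℝ := mk4 t0 (fun j => x0 j + R) with hhi
  have hle : lo ≤ hi := by
    intro i
    refine Fin.cases ?_ (fun j => ?_) i
    · simpa [hlo, hhi] using ht0.1
    · simp [hlo, hhi]; linarith
  have hsum : ∀ z, ∑ i, fderiv ℝ (fld Φ v i : (Fin 4 → ℝ) → ℝ) z (Pi.single i 1)
      = ((∑ i, Dp i (fld Φ v i) : Sm) : (Fin 4 → ℝ) → ℝ) z := by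
    intro z
    simp [Dp_apply]
  have hdiv := integral_divergence_of_hasFDerivAt_off_countable' lo hi hle
    (fun i => (fld Φ v i : (Fin 4 → ℝ) → ℝ))
    (fun i z => fderiv ℝ (fld Φ v i : (Fin 4 → ℝ) → ℝ) z) ∅ Set.countable_empty
    (fun i => (Sm_cont _).continuousOn)
    (fun z _ i => (Sm_diff (fld Φ v i) z).hasFDerivAt)
    (by
      simp only [hsum]
      exact (Sm_cont _).continuousOn.integrableOn_compact isCompact_Icc)
  simp only [hsum] at hdiv
  have hneg : ∫ z in Set.Icc lo hi, ((∑ i, Dp i (fld Φ v i) : Sm) : (Fin 4 → ℝ) → ℝ) z ≤ 0 := by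
    apply setIntegral_nonpos measurableSet_Icc
    intro z hz
    have a1 : (0:ℝ) ≤ z 0 := hz.1 0
    have a2 : z 0 ≤ t0 := hz.2 0
    exact fld_div_nonpos (by linarith) (h2 (z 0) ⟨a1, a2.trans ht0.2⟩ z rfl)
  -- side faces
  have hside : ∀ (j : Fin 3) (c : ℝ), (c - x0 j) * (c - x0 j) = R * R →
      ∫ x in Set.Icc (lo ∘ j.succ.succAbove) (hi ∘ j.succ.succAbove),
        (fld Φ v j.succ : (Fin 4 → ℝ) → ℝ) (j.succ.insertNth c x) = 0 := by
    intro j c hc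
    apply setIntegral_eq_zero_of_forall_eq_zero
    intro x hx
    have b0 : (j.succ.insertNth c x : Fin 4 → ℝ) 0 = x 0 := by
      have : (0 : Fin 4) = j.succ.succAbove 0 := by simp
      rw [this, Fin.insertNth_apply_succAbove]
    have bj : (j.succ.insertNth c x : Fin 4 → ℝ) j.succ = c := by simp
    have x1 : 0 ≤ x 0 := by
      have := hx.1 0
      simpa [hlo] using this
    have x2 : x 0 ≤ t0 := by
      have := hx.2 0
      simpa [hhi] using this
    have hΦ0 : (Φ : (Fin 4 → ℝ) → ℝ) (j.succ.insertNth c x) = 0 := by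
      rw [hΦ, cut_apply]
      apply expNegInvGlue.zero_of_nonpos
      rw [qc_apply, b0]
      have := Finset.single_le_sum (f := fun k : Fin 3 =>
        ((j.succ.insertNth c x : Fin 4 → ℝ) k.succ - x0 k) *
          ((j.succ.insertNth c x : Fin 4 → ℝ) k.succ - x0 k))
        (fun k _ => mul_self_nonneg _) (Finset.mem_univ j)
      simp only [bj, hc] at this
      nlinarith
    rw [fld_succ]
    simp [hΦ0]
  have hback : ∫ x in Set.Icc (lo ∘ (0 : Fin 4).succAbove) (hi ∘ (0 : Fin 4).succAbove),
        (fld Φ v 0 : (Fin 4 → ℝ) → ℝ) ((0 : Fin 4).insertNth (lo 0) x) = 0 := by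
    apply setIntegral_eq_zero_of_forall_eq_zero
    intro x hx
    have b0 : ((0 : Fin 4).insertNth (lo 0) x : Fin 4 → ℝ) 0 = 0 := by
      simp [hlo]
    have e0 := h1 _ b0
    have ej := fun j => Zt_Dp h0 j _ b0
    rw [fld_zero]
    simp only [Fin.sum_univ_three, Subalgebra.coe_mul, Subalgebra.coe_add, Pi.mul_apply,
      Pi.add_apply, e0, ej]
    simp
  rw [hdiv, Fin.sum_univ_succ, hback, sub_zero, Finset.sum_eq_zero, add_zero] at hneg
  swap
  · intro j _
    rw [hside, hside, sub_zero]
    · simp [hlo]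
    · simp [hhi]
  set I := Set.Icc (lo ∘ (0 : Fin 4).succAbove) (hi ∘ (0 : Fin 4).succAbove) with hI
  have hfun : (fun x : Fin 3 → ℝ => (fld Φ v 0 : (Fin 4 → ℝ) → ℝ)
      ((0 : Fin 4).insertNth (hi 0) x)) = fun x => (fld Φ v 0 : (Fin 4 → ℝ) → ℝ) (mk4 t0 x) := by
    funext x
    congr 1
    rw [Fin.insertNth_zero']
    rfl
  rw [hfun] at hneg
  have hnn : ∀ x, 0 ≤ (fld Φ v 0 : (Fin 4 → ℝ) → ℝ) (mk4 t0 x) := by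
    intro x
    rw [fld_zero]
    simp only [Fin.sum_univ_three, Subalgebra.coe_mul, Subalgebra.coe_add, Pi.mul_apply,
      Pi.add_apply]
    apply mul_nonneg
    · exact expNegInvGlue.nonneg _
    · nlinarith [mul_self_nonneg ((Dp 0 v : (Fin 4 → ℝ) → ℝ) (mk4 t0 x)),
        mul_self_nonneg ((Dp (Fin.succ 0) v : (Fin 4 → ℝ) → ℝ) (mk4 t0 x)),
        mul_self_nonneg ((Dp (Fin.succ 1) v : (Fin 4 → ℝ) → ℝ) (mk4 t0 x)),
        mul_self_nonneg ((Dp (Fin.succ 2) v : (Fin 4 → ℝ) → ℝ) (mk4 t0 x))]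
  have hcont : Continuous (fun x => (fld Φ v 0 : (Fin 4 → ℝ) → ℝ) (mk4 t0 x)) :=
    (Sm_cont _).comp (mk4_contDiff.continuous.comp (Continuous.prodMk continuous_const continuous_id))
  have hz := le_antisymm hneg (integral_nonneg hnn)
  rw [setIntegral_eq_zero_iff_of_nonneg_ae (Filter.Eventually.of_forall hnn)
    (hcont.continuousOn.integrableOn_compact isCompact_Icc)] at hz
  have hball : Metric.ball x0 R ⊆ I := by
    intro y hy
    have hy' : ∀ j, |y j - x0 j| ≤ R := fun j =>
      ((Real.dist_eq _ _).symm.le.trans (dist_le_pi_dist y x0 j)).trans (le_of_lt hy)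
    constructor <;> intro j <;> have := abs_le.1 (hy' j) <;>
      simp [hlo, hhi] <;> linarith
  have hae := ae_mono (Measure.restrict_mono hball le_rfl) hz
  have hEq := Measure.eqOn_open_of_ae_eq hae Metric.isOpen_ball hcont.continuousOn
    continuousOn_const (Metric.mem_ball_self hRpos)
  simp only [fld_zero, Fin.sum_univ_three, Subalgebra.coe_mul, Subalgebra.coe_add, Pi.mul_apply,
      Pi.add_apply, Pi.zero_apply] at hEq
  have hΦp : 0 < (Φ : (Fin 4 → ℝ) → ℝ) (mk4 t0 x0) := by
    rw [hΦ, cut_apply]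
    apply expNegInvGlue.pos_of_pos
    rw [qc_apply]
    simp [hR]
  have hE := (mul_eq_zero.1 hEq).resolve_left hΦp.ne'
  nlinarith [mul_self_nonneg ((Dp 0 v : (Fin 4 → ℝ) → ℝ) (mk4 t0 x0)),
        mul_self_nonneg ((Dp (Fin.succ 0) v : (Fin 4 → ℝ) → ℝ) (mk4 t0 x0)),
        mul_self_nonneg ((Dp (Fin.succ 1) v : (Fin 4 → ℝ) → ℝ) (mk4 t0 x0)),
        mul_self_nonneg ((Dp (Fin.succ 2) v : (Fin 4 → ℝ) → ℝ) (mk4 t0 x0))]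

theorem wave_unique {T : ℝ} {v : Sm} (h0 : v ∈ Zt 0) (h1 : Dp 0 v ∈ Zt 0)
    (h2 : ∀ t ∈ Set.Icc 0 T, Dp 0 (Dp 0 v) - ∑ j : Fin 3, Dp j.succ (Dp j.succ v) ∈ Zt t) :
    ∀ t ∈ Set.Icc 0 T, v ∈ Zt t := by
  intro t ht
  rw [Zt_iff]
  intro x
  have := ftc_once (T := T) (k := fun _ => 0) (Dp_time v x) (h0 _ rfl) (cont_time _ x)
    (fun s hs => energy_core h0 h1 h2 hs x) t ht
  simpa using this

theorem exists_Sm (C : ℝ → (Fin 3 → ℝ) → Fin 3 → ℝ)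
    (hC : ContDiff ℝ (⊤ : ℕ∞) (Function.uncurry C)) :
    ∃ c : Fin 3 → Sm, C = fun t x i => (c i : (Fin 4 → ℝ) → ℝ) (mk4 t x) := by
  have h : ∀ i : Fin 3, ContDiff ℝ (⊤ : ℕ∞)
      (fun z : Fin 4 → ℝ => C (z 0) (fun j => z j.succ) i) := by
    intro i
    have h1 : ContDiff ℝ (⊤ : ℕ∞)
        (fun z : Fin 4 → ℝ => ((z 0, fun j : Fin 3 => z j.succ) : ℝ × (Fin 3 → ℝ))) := by
      fun_prop
    exact (contDiff_pi.1 (hC.comp h1)) i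
  exact ⟨fun i => ⟨_, h i⟩, rfl⟩

theorem pd_Sm (G : Fin 3 → Sm) (t : ℝ) (j : Fin 3) :
    pd (fun x i => (G i : (Fin 4 → ℝ) → ℝ) (mk4 t x)) j
      = fun x i => (Dp j.succ (G i) : (Fin 4 → ℝ) → ℝ) (mk4 t x) := by
  funext x i
  unfold pd
  have hd : ∀ i, DifferentiableAt ℝ (fun x => (G i : (Fin 4 → ℝ) → ℝ) (mk4 t x)) x := by
    intro i
    have h1 : ContDiff ℝ (⊤ : ℕ∞) (fun x : Fin 3 → ℝ => mk4 t x) :=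
      mk4_contDiff.comp (contDiff_const.prodMk contDiff_id)
    exact (((Sm_cd (G i)).comp h1).differentiable (by simp)) x
  rw [fderiv_pi hd]
  simp only [ContinuousLinearMap.pi_apply]
  exact Dp_space _ _ _ _

theorem div3_Sm (G : Fin 3 → Sm) (t : ℝ) :
    div3 (fun x i => (G i : (Fin 4 → ℝ) → ℝ) (mk4 t x))
      = fun x => ((∑ i : Fin 3, Dp i.succ (G i) : Sm) : (Fin 4 → ℝ) → ℝ) (mk4 t x) := by
  funext x
  unfold div3
  simp only [pd_Sm]
  simp [Fin.sum_univ_three]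

theorem lap3_Sm (G : Fin 3 → Sm) (t : ℝ) :
    lap3 (fun x i => (G i : (Fin 4 → ℝ) → ℝ) (mk4 t x))
      = fun x i => ((∑ j : Fin 3, Dp j.succ (Dp j.succ (G i)) : Sm) :
          (Fin 4 → ℝ) → ℝ) (mk4 t x) := by
  funext x i
  unfold lap3
  simp only [pd_Sm]
  simp [Fin.sum_univ_three]

theorem grad3_Sm (g : Sm) (t : ℝ) :
    grad3 (fun x => (g : (Fin 4 → ℝ) → ℝ) (mk4 t x))
      = fun x i => (Dp i.succ g : (Fin 4 → ℝ) → ℝ) (mk4 t x) := by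
  funext x i
  exact Dp_space _ _ _ _

theorem deriv_Sm (g : Sm) (x : Fin 3 → ℝ) :
    deriv (fun t => (g : (Fin 4 → ℝ) → ℝ) (mk4 t x))
      = fun t => (Dp 0 g : (Fin 4 → ℝ) → ℝ) (mk4 t x) := by
  funext t
  exact (Dp_time g x t).deriv

theorem derivv_Sm (G : Fin 3 → Sm) (x : Fin 3 → ℝ) :
    deriv (fun t => fun i => (G i : (Fin 4 → ℝ) → ℝ) (mk4 t x))
      = fun t i => (Dp 0 (G i) : (Fin 4 → ℝ) → ℝ) (mk4 t x) := by
  funext t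
  exact (hasDerivAt_pi.2 fun i => Dp_time (G i) x t).deriv

theorem int_Sm (G : Fin 3 → Sm) (x : Fin 3 → ℝ) (t : ℝ) (i : Fin 3) :
    (∫ s in (0:ℝ)..t, ∫ u in (0:ℝ)..s, fun i => (G i : (Fin 4 → ℝ) → ℝ) (mk4 u x)) i
      = ∫ s in (0:ℝ)..t, ∫ u in (0:ℝ)..s, (G i : (Fin 4 → ℝ) → ℝ) (mk4 u x) := by
  have hc : Continuous (fun u => fun i => (G i : (Fin 4 → ℝ) → ℝ) (mk4 u x)) :=
    continuous_pi fun i => cont_time (G i) x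
  have hc2 : Continuous (fun s : ℝ => ∫ u in (0:ℝ)..s,
      fun i => (G i : (Fin 4 → ℝ) → ℝ) (mk4 u x)) :=
    intervalIntegral.continuous_primitive (fun a b => hc.intervalIntegrable a b) 0
  have h1 := ContinuousLinearMap.intervalIntegral_comp_comm
    (ContinuousLinearMap.proj (R := ℝ) (φ := fun _ : Fin 3 => ℝ) i) (hc2.intervalIntegrable (μ := volume) 0 t)
  have h2 := fun s => ContinuousLinearMap.intervalIntegral_comp_comm
    (ContinuousLinearMap.proj (R := ℝ) (φ := fun _ : Fin 3 => ℝ) i) (hc.intervalIntegrable (μ := volume) 0 s)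
  simp only [ContinuousLinearMap.proj_apply] at h1 h2
  rw [← h1]
  simp only [h2]

set_option maxHeartbeats 2000000 in
theorem main_Sm {T : ℝ} (hT : 0 < T) {ε : ℝ} (hε : 0 < ε) (c F : Fin 3 → Sm)
    (hF : ∀ t ∈ Set.Icc 0 ε, ∀ i, F i ∈ Zt t)
    (hc0 : ∀ i, c i ∈ Zt 0) (hc1 : ∀ i, Dp 0 (c i) ∈ Zt 0)
    (hred : ∀ t ∈ Set.Icc 0 T, ∀ x, ∀ i,
      ((Dp 0 (Dp 0 (c i)) - ∑ j : Fin 3, Dp j.succ (Dp j.succ (c i)) - F i : Sm) :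
        (Fin 4 → ℝ) → ℝ) (mk4 t x)
      = ∫ s in (0:ℝ)..t, ∫ u in (0:ℝ)..s,
        ((-(Dp i.succ (∑ k : Fin 3, Dp k.succ (F k))) : Sm) : (Fin 4 → ℝ) → ℝ) (mk4 u x)) :
    ∀ t ∈ Set.Icc 0 T,
      Dp 0 (Dp 0 (∑ i : Fin 3, Dp i.succ (c i))) - ∑ k : Fin 3, Dp k.succ (F k) ∈ Zt t := by
  set f : Sm := ∑ k : Fin 3, Dp k.succ (F k) with hf
  set H : Fin 3 → Sm := fun i =>
    Dp 0 (Dp 0 (c i)) - ∑ j : Fin 3, Dp j.succ (Dp j.succ (c i)) - F i with hH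
  have z0 : (0:ℝ) ∈ Set.Icc 0 T := ⟨le_rfl, hT.le⟩
  have hF0 : ∀ i, F i ∈ Zt 0 := hF 0 ⟨le_rfl, hε.le⟩
  have hF1 : ∀ i, Dp 0 (F i) ∈ Zt 0 := by
    intro i
    rw [Zt_iff]
    intro x
    refine diff_once hε (k := fun _ => 0) (Dp_time (F i) x) continuous_const ?_ 0 ⟨le_rfl, hε.le⟩
    intro t ht
    simpa using hF t ht i _ (mk4_zero t x)
  have hinner : ∀ (i : Fin 3) (x : Fin 3 → ℝ), Continuous fun s : ℝ => ∫ u in (0:ℝ)..s,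
        ((-(Dp i.succ f) : Sm) : (Fin 4 → ℝ) → ℝ) (mk4 u x) := fun i x =>
    intervalIntegral.continuous_primitive
      (fun a b => (cont_time (-(Dp i.succ f)) x).intervalIntegrable a b) 0
  have hH0 : ∀ i, H i ∈ Zt 0 := by
    intro i
    rw [Zt_iff]
    intro x
    rw [hH, hred 0 z0 x i]
    simp
  have hHt : ∀ i x, ∀ t ∈ Set.Icc 0 T, (Dp 0 (H i) : (Fin 4 → ℝ) → ℝ) (mk4 t x) =
      ∫ u in (0:ℝ)..t, ((-(Dp i.succ f) : Sm) : (Fin 4 → ℝ) → ℝ) (mk4 u x) := fun i x =>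
    diff_once hT (Dp_time (H i) x) (hinner i x) (fun t ht => hred t ht x i)
  have hH1 : ∀ i, Dp 0 (H i) ∈ Zt 0 := by
    intro i
    rw [Zt_iff]
    intro x
    rw [hHt i x 0 z0]
    simp
  have hH2 : ∀ i, ∀ t ∈ Set.Icc 0 T, Dp 0 (Dp 0 (H i)) + Dp i.succ f ∈ Zt t := by
    intro i t ht
    rw [Zt_iff]
    intro x
    have := diff_once hT (Dp_time (Dp 0 (H i)) x) (cont_time (-(Dp i.succ f)) x) (hHt i x) t ht
    simp [this]
  have e0 : Dp 0 (Dp 0 (∑ i : Fin 3, Dp i.succ (c i))) - f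
      = ∑ i : Fin 3, Dp i.succ (H i + ∑ j : Fin 3, Dp j.succ (Dp j.succ (c i))) := by
    rw [hf, hH]
    simp only [map_sum, map_add, map_sub, Dp_comm _ 0, sub_add_cancel, Finset.sum_sub_distrib,
      Finset.sum_add_distrib]
    abel
  have e1 : Dp 0 (Dp 0 (Dp 0 (∑ i : Fin 3, Dp i.succ (c i))) - f)
      = ∑ i : Fin 3, Dp i.succ (Dp 0 (H i) + ∑ j : Fin 3, Dp j.succ (Dp j.succ (Dp 0 (c i)))) := by
    rw [e0]
    simp only [map_sum, map_add, Dp_comm _ 0]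
  have e2 : Dp 0 (Dp 0 (Dp 0 (Dp 0 (∑ i : Fin 3, Dp i.succ (c i))) - f))
      - ∑ j : Fin 3, Dp j.succ (Dp j.succ (Dp 0 (Dp 0 (∑ i : Fin 3, Dp i.succ (c i))) - f))
      = ∑ i : Fin 3, Dp i.succ (Dp 0 (Dp 0 (H i)) + Dp i.succ f) := by
    rw [hf, hH]
    simp only [Fin.sum_univ_three, map_add, map_sub, Dp_comm _ 0, Dp_comm (Fin.succ 2) (Fin.succ 1),
      Dp_comm (Fin.succ 2) (Fin.succ 0), Dp_comm (Fin.succ 1) (Fin.succ 0)]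
    abel
  apply wave_unique
  · rw [e0]
    exact Submodule.sum_mem _ fun i _ => Zt_Dp (Submodule.add_mem _ (hH0 i)
      (Submodule.sum_mem _ fun j _ => Zt_Dp (Zt_Dp (hc0 i) j) j)) i
  · rw [e1]
    exact Submodule.sum_mem _ fun i _ => Zt_Dp (Submodule.add_mem _ (hH1 i)
      (Submodule.sum_mem _ fun j _ => Zt_Dp (Zt_Dp (hc1 i) j) j)) i
  · intro t ht
    rw [e2]
    exact Submodule.sum_mem _ fun i _ => Zt_Dp (hH2 i t ht) i

/-- Solving the reduced equation `∂_t²C - ΔC = -∫₀ᵗ∫₀ˢ∇div F + F` with vanishing initial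
data and `F` vanishing for small times: then `∂_t² div C - div F` vanishes identically,
`div C(t) = ∫₀ᵗ∫₀ˢ div F`, and `C` solves the original system
`∂_t²C - ΔC + ∇ div C = F` on `[0,T]`. -/
theorem stmt17 (T ε : ℝ) (hT : 0 < T) (hε : 0 < ε)
    (C F : ℝ → (Fin 3 → ℝ) → Fin 3 → ℝ)
    (hC : ContDiff ℝ (⊤ : ℕ∞) (Function.uncurry C)) (hF : ContDiff ℝ (⊤ : ℕ∞) (Function.uncurry F))
    (hFsmall : ∀ t ∈ Set.Icc (0 : ℝ) ε, ∀ x, F t x = 0)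
    (hinit0 : ∀ x, C 0 x = 0)
    (hinit1 : ∀ x, deriv (fun t => C t x) 0 = 0)
    (hreduced : ∀ t ∈ Set.Icc (0 : ℝ) T, ∀ x,
      deriv (deriv (fun t' => C t' x)) t - lap3 (C t) x
        = -(∫ s in (0 : ℝ)..t, ∫ u in (0 : ℝ)..s, grad3 (fun y => div3 (F u) y) x)
          + F t x) :
    (∀ t ∈ Set.Icc (0 : ℝ) T, ∀ x,
      deriv (deriv (fun t' => div3 (C t') x)) t - div3 (F t) x = 0) ∧
    (∀ t ∈ Set.Icc (0 : ℝ) T, ∀ x,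
      div3 (C t) x = ∫ s in (0 : ℝ)..t, ∫ u in (0 : ℝ)..s, div3 (F u) x) ∧
    (∀ t ∈ Set.Icc (0 : ℝ) T, ∀ x,
      deriv (deriv (fun t' => C t' x)) t - lap3 (C t) x
        + grad3 (fun y => div3 (C t) y) x = F t x) := by
  obtain ⟨c, rfl⟩ := exists_Sm C hC
  obtain ⟨f, rfl⟩ := exists_Sm F hF
  simp only [div3_Sm, lap3_Sm, grad3_Sm, derivv_Sm, deriv_Sm] at *
  have hc0 : ∀ i, c i ∈ Zt 0 := fun i => Zt_iff.2 fun x => congrFun (hinit0 x) i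
  have hc1 : ∀ i, Dp 0 (c i) ∈ Zt 0 := fun i => Zt_iff.2 fun x => congrFun (hinit1 x) i
  have hred : ∀ t ∈ Set.Icc 0 T, ∀ x, ∀ i,
      ((Dp 0 (Dp 0 (c i)) - ∑ j : Fin 3, Dp j.succ (Dp j.succ (c i)) - f i : Sm) :
        (Fin 4 → ℝ) → ℝ) (mk4 t x)
      = - ∫ s in (0:ℝ)..t, ∫ u in (0:ℝ)..s,
        ((Dp i.succ (∑ k : Fin 3, Dp k.succ (f k)) : Sm) : (Fin 4 → ℝ) → ℝ) (mk4 u x) := by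
    intro t ht x i
    have h := congrFun (hreduced t ht x) i
    rw [Pi.add_apply, Pi.neg_apply, Pi.sub_apply,
      int_Sm (fun i => Dp i.succ (∑ k : Fin 3, Dp k.succ (f k)))] at h
    rw [← sub_eq_iff_eq_add] at h
    exact h
  have hv := main_Sm hT hε c f
    (fun t ht i => Zt_iff.2 fun x => congrFun (hFsmall t ht x) i) hc0 hc1
    (by
      intro t ht x i
      rw [hred t ht x i]
      have hn : ∀ z, ((-(Dp i.succ (∑ k : Fin 3, Dp k.succ (f k))) : Sm) : (Fin 4 → ℝ) → ℝ) z
        = -((Dp i.succ (∑ k : Fin 3, Dp k.succ (f k)) : Sm) : (Fin 4 → ℝ) → ℝ) z := fun _ => rfl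
      simp only [hn, intervalIntegral.integral_neg])
  have hD0 : ∑ i : Fin 3, Dp i.succ (c i) ∈ Zt 0 :=
    Submodule.sum_mem _ fun i _ => Zt_Dp (hc0 i) i
  have hD1 : Dp 0 (∑ i : Fin 3, Dp i.succ (c i)) ∈ Zt 0 := by
    simp only [map_sum, Dp_comm 0]
    exact Submodule.sum_mem _ fun i _ => Zt_Dp (hc1 i) i
  refine ⟨fun t ht x => hv t ht _ (mk4_zero t x), fun t ht x => ftc_twice hD0 hD1 hv t ht x, ?_⟩
  intro t ht x
  funext i
  have hg := ftc_twice (T := T) (g := Dp i.succ (∑ i : Fin 3, Dp i.succ (c i)))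
    (h := Dp i.succ (∑ k : Fin 3, Dp k.succ (f k))) (Zt_Dp hD0 i)
    (by rw [Dp_comm]; exact Zt_Dp hD1 i)
    (fun t ht => by
      have := Zt_Dp (hv t ht) i
      rwa [map_sub, Dp_comm i.succ 0, Dp_comm i.succ 0] at this) t ht x
  have h := hred t ht x i
  rw [← hg] at h
  simp only [AddSubgroupClass.coe_sub, Pi.sub_apply, Pi.add_apply] at h ⊢
  linarith
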